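/- Let d ≥ 1 be an integer and let β ∈ (0, d). There exists a constant C > 0, depending only on d and β, such that for all t₁, t₂, t₃, t₄ > 0, all R > 0, and all ξ ∈ ℝ^d, ∫_{Q_R × Q_R} ∫_{ℝ^{4d}} p_{t₁}(x₁ − ỹ) p_{t₂}(x₂ − z̃) p_{t₃}(ỹ − z) p_{t₄}(ξ − y) ‖y − ỹ‖^{−β} ‖z − z̃‖^{−β} dỹ dz̃ dy dz dx₁ dx₂ ≤ C R^{2d−2β}. (In the paper this is the bound for the quantity Φ^{(1)}(τ, ξ) governing the first-derivative term, with t₁ = t − s, t₂ = t − r, t₃ = s − r, t₄ = τ − s for 0 < r < s < τ < t.) -/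

import Mathlib

open MeasureTheory

noncomputable def heatKernel (d : ℕ) (t : ℝ) (x : EuclideanSpace ℝ (Fin d)) : ℝ :=
  (2 * Real.pi * t) ^ (-(d : ℝ) / 2) * Real.exp (-‖x‖ ^ 2 / (2 * t))

def box (d : ℕ) (R : ℝ) : Set (EuclideanSpace ℝ (Fin d)) :=
  {x | ∀ i, |x i| ≤ R}

/-!
The uniform bound `∀ c, ∫ x in s, k (c - x) ≤ M` passes from a kernel `k` to any convolution
`p ⋆ k`, with `M` multiplied by the mass of `p`. Integrating out `y`, `z` and `ztil` turns the
integrand into a product of two iterated convolutions with the Riesz kernel, one linking `x₁` to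
`ξ` and one linking `x₂` to `ytil`; the bound for the second is uniform in `ytil`, so the two
estimates multiply and the times `tᵢ` disappear. For the Riesz kernel itself, splitting the integral
over `s` at distance `r` from `c` bounds it by `A r ^ (d - β) + r ^ (-β) |s|`, and
`r = |s| ^ (1 / d)` gives `M = (A + 1) |s| ^ (1 - β / d)`.
-/

open Metric Module
open scoped ENNReal NNReal

section Convolution

variable {G : Type*} [AddCommGroup G] [MeasurableSpace G] [MeasurableAdd₂ G] {μ : Measure G}

lemma lintegral_sub_mul_sub_eq_lconvolution_neg [μ.IsAddLeftInvariant]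
    (p k : G → ℝ≥0∞) (a b : G) :
    ∫⁻ y, p (b - y) * k (a - y) ∂μ = ((fun y ↦ p (-y)) ⋆ₗ[μ] k) (a - b) := by
  rw [← lintegral_add_left_eq_self _ b]
  simp only [lconvolution_def, neg_add_eq_sub, sub_add_cancel_left, sub_add_eq_sub_sub]

variable [MeasurableNeg G]

lemma lintegral_mul_sub_eq_lconvolution [μ.IsAddLeftInvariant] [μ.IsNegInvariant]
    (p k : G → ℝ≥0∞) (a b : G) :
    ∫⁻ y, p (a - y) * k (y - b) ∂μ = (p ⋆ₗ[μ] k) (a - b) := by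
  rw [← lintegral_sub_left_eq_self _ a]
  simp only [sub_sub_cancel, lconvolution_def, neg_add_eq_sub, sub_right_comm]

variable [SFinite μ]

lemma setLIntegral_lconvolution_sub_le {p k : G → ℝ≥0∞} (hp : Measurable p) (hk : Measurable k)
    {s : Set G} {M : ℝ≥0∞} (hM : ∀ c, ∫⁻ x in s, k (c - x) ∂μ ≤ M) (c : G) :
    ∫⁻ x in s, (p ⋆ₗ[μ] k) (c - x) ∂μ ≤ (∫⁻ x, p x ∂μ) * M := by
  calc ∫⁻ x in s, (p ⋆ₗ[μ] k) (c - x) ∂μ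
      = ∫⁻ x in s, ∫⁻ y, p y * k (c - y - x) ∂μ ∂μ := by
        simp only [lconvolution_def, neg_add_eq_sub, sub_right_comm]
    _ = ∫⁻ y, p y * ∫⁻ x in s, k (c - y - x) ∂μ ∂μ := by
        rw [lintegral_lintegral_swap (by fun_prop)]
        exact lintegral_congr fun y ↦ lintegral_const_mul _ (by fun_prop)
    _ ≤ ∫⁻ y, p y * M ∂μ := by gcongr; exact hM _
    _ = (∫⁻ x, p x ∂μ) * M := lintegral_mul_const _ hp

variable [μ.IsAddLeftInvariant] [μ.IsNegInvariant] {p₁ p₂ p₃ p₄ k l : G → ℝ≥0∞}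

lemma lintegral_chain_eq_lintegral_lconvolution (hp₂ : Measurable p₂) (hp₃ : Measurable p₃)
    (hp₄ : Measurable p₄) (hk : Measurable k) (hl : Measurable l) (x₁ x₂ ξ : G) :
    ∫⁻ u, ∫⁻ v, ∫⁻ y, ∫⁻ z, p₁ (x₁ - u) * p₂ (x₂ - v) * p₃ (u - z) * p₄ (ξ - y) *
        k (y - u) * l (z - v) ∂μ ∂μ ∂μ ∂μ =
      ∫⁻ u, p₁ (x₁ - u) * (p₄ ⋆ₗ[μ] k) (ξ - u) *
        ((fun v ↦ p₂ (-v)) ⋆ₗ[μ] (p₃ ⋆ₗ[μ] l)) (u - x₂) ∂μ := by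
  refine lintegral_congr fun u ↦ ?_
  calc ∫⁻ v, ∫⁻ y, ∫⁻ z, p₁ (x₁ - u) * p₂ (x₂ - v) * p₃ (u - z) * p₄ (ξ - y) *
        k (y - u) * l (z - v) ∂μ ∂μ ∂μ
      = ∫⁻ v, ∫⁻ y, ∫⁻ z, p₁ (x₁ - u) * p₂ (x₂ - v) * (p₄ (ξ - y) * k (y - u)) *
          (p₃ (u - z) * l (z - v)) ∂μ ∂μ ∂μ := by
        congr! 6; ring
    _ = ∫⁻ v, ∫⁻ y, p₁ (x₁ - u) * p₂ (x₂ - v) * (p₄ (ξ - y) * k (y - u)) *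
          (p₃ ⋆ₗ[μ] l) (u - v) ∂μ ∂μ := by
        congr! 4
        rw [lintegral_const_mul _ (by fun_prop), lintegral_mul_sub_eq_lconvolution]
    _ = ∫⁻ v, p₁ (x₁ - u) * p₂ (x₂ - v) * (p₄ ⋆ₗ[μ] k) (ξ - u) * (p₃ ⋆ₗ[μ] l) (u - v) ∂μ := by
        congr! 2
        rw [lintegral_mul_const _ (by fun_prop), lintegral_const_mul _ (by fun_prop),
          lintegral_mul_sub_eq_lconvolution]
    _ = ∫⁻ v, p₁ (x₁ - u) * (p₄ ⋆ₗ[μ] k) (ξ - u) *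
          (p₂ (x₂ - v) * (p₃ ⋆ₗ[μ] l) (u - v)) ∂μ := by
        congr! 2; ring
    _ = _ := by
        rw [lintegral_const_mul _ (by fun_prop), lintegral_sub_mul_sub_eq_lconvolution_neg]

theorem setLIntegral_setLIntegral_chain_le (hp₁ : Measurable p₁) (hp₂ : Measurable p₂)
    (hp₃ : Measurable p₃) (hp₄ : Measurable p₄) (hk : Measurable k) (hl : Measurable l)
    {s t : Set G} {M N : ℝ≥0∞} (hM : ∀ c, ∫⁻ x in s, k (c - x) ∂μ ≤ M)
    (hN : ∀ c, ∫⁻ x in t, l (c - x) ∂μ ≤ N) (ξ : G) :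
    ∫⁻ x₁ in s, ∫⁻ x₂ in t, ∫⁻ u, ∫⁻ v, ∫⁻ y, ∫⁻ z,
        p₁ (x₁ - u) * p₂ (x₂ - v) * p₃ (u - z) * p₄ (ξ - y) *
          k (y - u) * l (z - v) ∂μ ∂μ ∂μ ∂μ ∂μ ∂μ ≤
      ((∫⁻ x, p₁ x ∂μ) * ((∫⁻ x, p₄ x ∂μ) * M)) * ((∫⁻ x, p₂ x ∂μ) * ((∫⁻ x, p₃ x ∂μ) * N)) := by
  set K := p₄ ⋆ₗ[μ] k with hK
  set L := (fun v ↦ p₂ (-v)) ⋆ₗ[μ] (p₃ ⋆ₗ[μ] l) with hL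
  set A := (∫⁻ x, p₁ x ∂μ) * ((∫⁻ x, p₄ x ∂μ) * M)
  set B := (∫⁻ x, p₂ x ∂μ) * ((∫⁻ x, p₃ x ∂μ) * N)
  have hK_meas : Measurable K := measurable_lconvolution μ hp₄ hk
  have hL_meas : Measurable L := by fun_prop
  have hA : ∫⁻ x₁ in s, ∫⁻ u, p₁ (x₁ - u) * K (ξ - u) ∂μ ∂μ ≤ A := by
    simpa only [lintegral_sub_mul_sub_eq_lconvolution_neg, lintegral_neg_eq_self] using
      setLIntegral_lconvolution_sub_le (p := fun x ↦ p₁ (-x)) (by fun_prop) hK_meas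
        (setLIntegral_lconvolution_sub_le hp₄ hk hM) ξ
  have hB (u : G) : ∫⁻ x₂ in t, L (u - x₂) ∂μ ≤ B := by
    simpa only [lintegral_neg_eq_self] using
      setLIntegral_lconvolution_sub_le (p := fun x ↦ p₂ (-x)) (by fun_prop) (by fun_prop)
        (setLIntegral_lconvolution_sub_le hp₃ hl hN) u
  calc _ = ∫⁻ x₁ in s, ∫⁻ x₂ in t, ∫⁻ u, p₁ (x₁ - u) * K (ξ - u) * L (u - x₂) ∂μ ∂μ ∂μ := by
        simp only [lintegral_chain_eq_lintegral_lconvolution hp₂ hp₃ hp₄ hk hl, hK, hL]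
    _ = ∫⁻ x₁ in s, ∫⁻ u, p₁ (x₁ - u) * K (ξ - u) * ∫⁻ x₂ in t, L (u - x₂) ∂μ ∂μ ∂μ := by
        refine lintegral_congr fun x₁ ↦ ?_
        rw [lintegral_lintegral_swap (by fun_prop)]
        exact lintegral_congr fun u ↦ lintegral_const_mul _ (by fun_prop)
    _ ≤ ∫⁻ x₁ in s, ∫⁻ u, p₁ (x₁ - u) * K (ξ - u) * B ∂μ ∂μ := by
        gcongr; exact hB _
    _ = ∫⁻ x₁ in s, (∫⁻ u, p₁ (x₁ - u) * K (ξ - u) ∂μ) * B ∂μ :=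
        lintegral_congr fun x₁ ↦ lintegral_mul_const _ (by fun_prop)
    _ = (∫⁻ x₁ in s, ∫⁻ u, p₁ (x₁ - u) * K (ξ - u) ∂μ ∂μ) * B :=
        lintegral_mul_const _ (by fun_prop)
    _ ≤ A * B := by gcongr

end Convolution

section Riesz

variable {E : Type*} [NormedAddCommGroup E] [MeasurableSpace E] [BorelSpace E] {μ : Measure E}

lemma setLIntegral_norm_sub_rpow_le [μ.IsAddLeftInvariant] [μ.IsNegInvariant] {β r : ℝ}
    (hβ : 0 ≤ β) (hr : 0 < r) (s : Set E) (c : E) :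
    ∫⁻ x in s, ‖‖c - x‖ ^ (-β)‖ₑ ∂μ ≤
      ∫⁻ x in ball 0 r, ‖‖x‖ ^ (-β)‖ₑ ∂μ + ENNReal.ofReal (r ^ (-β)) * μ s := by
  set f : E → ℝ≥0∞ := (ball 0 r).indicator fun x ↦ ‖‖x‖ ^ (-β)‖ₑ
  have : Measurable f := Measurable.indicator (by fun_prop) measurableSet_ball
  have hsplit (x : E) : ‖‖x‖ ^ (-β)‖ₑ ≤ f x + ENNReal.ofReal (r ^ (-β)) := by
    by_cases hx : x ∈ ball 0 r
    · simp only [f, Set.indicator_of_mem hx, le_self_add]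
    · rw [Real.enorm_of_nonneg (by positivity)]
      refine le_add_left (ENNReal.ofReal_le_ofReal ?_)
      exact Real.rpow_le_rpow_of_nonpos hr (by simpa using hx) (neg_nonpos.2 hβ)
  calc ∫⁻ x in s, ‖‖c - x‖ ^ (-β)‖ₑ ∂μ
      ≤ ∫⁻ x in s, (f (c - x) + ENNReal.ofReal (r ^ (-β))) ∂μ :=
        lintegral_mono fun x ↦ hsplit (c - x)
    _ = ∫⁻ x in s, f (c - x) ∂μ + ENNReal.ofReal (r ^ (-β)) * μ s := by
        rw [lintegral_add_right _ measurable_const, setLIntegral_const]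
    _ ≤ ∫⁻ x, f (c - x) ∂μ + ENNReal.ofReal (r ^ (-β)) * μ s := by
        grw [setLIntegral_le_lintegral]
    _ = _ := by rw [lintegral_sub_left_eq_self, lintegral_indicator measurableSet_ball]

variable (μ) [NormedSpace ℝ E] [FiniteDimensional ℝ E] [μ.IsAddHaarMeasure]

lemma setIntegral_ball_norm_rpow (γ : ℝ) {r : ℝ} (hr : 0 < r) :
    ∫ x in ball 0 r, ‖x‖ ^ γ ∂μ = r ^ (finrank ℝ E + γ) * ∫ x in ball 0 1, ‖x‖ ^ γ ∂μ := by
  have hscale := Measure.setIntegral_comp_smul_of_pos μ (fun x : E ↦ ‖x‖ ^ γ) (ball 0 1) hr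
  simp only [norm_smul, Real.norm_of_nonneg hr.le, Real.mul_rpow hr.le (norm_nonneg _),
    integral_const_mul, smul_unitBall hr.ne', smul_eq_mul] at hscale
  rw [Real.rpow_add hr, Real.rpow_natCast, mul_assoc, hscale, mul_inv_cancel_left₀ (by positivity)]

lemma setLIntegral_ball_norm_rpow (hE : 0 < finrank ℝ E) {β r : ℝ} (hβE : β < finrank ℝ E)
    (hr : 0 < r) :
    ∫⁻ x in ball 0 r, ‖‖x‖ ^ (-β)‖ₑ ∂μ =
      ENNReal.ofReal (r ^ (finrank ℝ E - β) * ∫ x in ball 0 1, ‖x‖ ^ (-β) ∂μ) := by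
  have hint : IntegrableOn (fun x ↦ ‖x‖ ^ (-β)) (ball (0 : E) r) μ :=
    integrableOn_ball_of_norm_le_rpow (C := 1) hE hβE
      (.of_forall fun x ↦ by rw [one_mul, Real.norm_of_nonneg (by positivity)])
      (Measurable.aestronglyMeasurable (by fun_prop))
  rw [sub_eq_add_neg, ← setIntegral_ball_norm_rpow μ (-β) hr,
    ofReal_integral_eq_lintegral_ofReal hint (.of_forall fun x ↦ by positivity)]
  exact lintegral_congr fun x ↦ Real.enorm_of_nonneg (by positivity)

lemma exists_setLIntegral_norm_sub_rpow_le {β : ℝ} (hβ : 0 ≤ β) (hβE : β < finrank ℝ E) :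
    ∃ C : ℝ≥0, 0 < C ∧ ∀ (s : Set E) (c : E),
      ∫⁻ x in s, ‖‖c - x‖ ^ (-β)‖ₑ ∂μ ≤ C * μ s ^ (1 - β / finrank ℝ E) := by
  have hd : (0 : ℝ) < finrank ℝ E := hβ.trans_lt hβE
  have hexp : 0 < 1 - β / finrank ℝ E := sub_pos.2 ((div_lt_one hd).2 hβE)
  set I := ∫ x in ball (0 : E) 1, ‖x‖ ^ (-β) ∂μ
  have hI : 0 ≤ I := integral_nonneg fun x ↦ by positivity
  refine ⟨I.toNNReal + 1, by positivity, fun s c ↦ ?_⟩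
  obtain hs | hs := eq_or_ne (μ s) 0
  · simp [Measure.restrict_eq_zero.2 hs]
  obtain hs' | hs' := eq_or_ne (μ s) ∞
  · simp [hs', hexp]
  set r := μ.real s ^ (finrank ℝ E : ℝ)⁻¹
  have hm : 0 < μ.real s := ENNReal.toReal_pos hs hs'
  have hr : 0 < r := by positivity
  have hr_pow (γ : ℝ) : r ^ γ = μ.real s ^ (γ / finrank ℝ E) := by
    rw [← Real.rpow_mul hm.le, inv_mul_eq_div]
  have hμ : μ s = ENNReal.ofReal (μ.real s) := (ofReal_measureReal hs').symm
  calc ∫⁻ x in s, ‖‖c - x‖ ^ (-β)‖ₑ ∂μ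
      ≤ ∫⁻ x in ball 0 r, ‖‖x‖ ^ (-β)‖ₑ ∂μ + ENNReal.ofReal (r ^ (-β)) * μ s :=
        setLIntegral_norm_sub_rpow_le hβ hr s c
    _ = ENNReal.ofReal (r ^ (finrank ℝ E - β) * I + r ^ (-β) * μ.real s) := by
        rw [setLIntegral_ball_norm_rpow μ (by exact_mod_cast hd) hβE hr, hμ,
          ← ENNReal.ofReal_mul (by positivity),
          ← ENNReal.ofReal_add (by positivity) (by positivity)]
    _ = ENNReal.ofReal ((I + 1) * μ.real s ^ (1 - β / finrank ℝ E)) := by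
        congr 1
        rw [hr_pow, hr_pow, sub_div, div_self hd.ne', neg_div, sub_eq_add_neg,
          Real.rpow_add hm, Real.rpow_one]
        ring
    _ = _ := by
        rw [ENNReal.ofReal_mul (by positivity), ENNReal.ofReal_add hI zero_le_one, hμ,
          ENNReal.ofReal_rpow_of_pos hm]
        simp [ENNReal.ofReal]

theorem stmt_8_general {β : ℝ} (hβ : 0 ≤ β) (hβE : β < finrank ℝ E) :
    ∃ C : ℝ, 0 < C ∧ ∀ {p₁ p₂ p₃ p₄ : E → ℝ}, Measurable p₁ → Measurable p₂ → Measurable p₃ →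
      Measurable p₄ → Integrable p₁ μ → Integrable p₂ μ → Integrable p₃ μ → Integrable p₄ μ →
      ∀ {s t : Set E}, μ s ≠ ∞ → μ t ≠ ∞ → ∀ ξ : E,
      (∫ x₁ in s, ∫ x₂ in t, ∫ ytil, ∫ ztil, ∫ y, ∫ z,
          p₁ (x₁ - ytil) * p₂ (x₂ - ztil) * p₃ (ytil - z) * p₄ (ξ - y) *
            ‖y - ytil‖ ^ (-β) * ‖z - ztil‖ ^ (-β) ∂μ ∂μ ∂μ ∂μ ∂μ ∂μ) ≤
        C * ((∫ x, ‖p₁ x‖ ∂μ) * (∫ x, ‖p₂ x‖ ∂μ) * (∫ x, ‖p₃ x‖ ∂μ) * ∫ x, ‖p₄ x‖ ∂μ) *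
          (μ.real s * μ.real t) ^ (1 - β / finrank ℝ E) := by
  obtain ⟨C, hC, hriesz⟩ := exists_setLIntegral_norm_sub_rpow_le μ hβ hβE
  refine ⟨C ^ 2, by positivity, ?_⟩
  intro p₁ p₂ p₃ p₄ hp₁ hp₂ hp₃ hp₄ hi₁ hi₂ hi₃ hi₄ s t hs ht ξ
  have hexp : 0 ≤ 1 - β / finrank ℝ E := sub_nonneg.2 (div_le_one_of_le₀ hβE.le (by positivity))
  have hk : Measurable fun x : E ↦ ‖‖x‖ ^ (-β)‖ₑ := by fun_prop
  have hbound := setLIntegral_setLIntegral_chain_le hp₁.enorm hp₂.enorm hp₃.enorm hp₄.enorm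
    hk hk (hriesz s) (hriesz t) ξ
  refine (Real.le_norm_self _).trans ?_
  rw [← toReal_enorm]
  refine (ENNReal.toReal_mono ?_ (le_trans ?_ hbound)).trans_eq ?_
  · have := hi₁.2.ne
    have := hi₂.2.ne
    have := hi₃.2.ne
    have := hi₄.2.ne
    finiteness
  · iterate 6 refine (enorm_integral_le_lintegral_enorm _).trans (lintegral_mono fun _ ↦ ?_)
    simp only [enorm_mul, le_refl]
  · simp only [ENNReal.toReal_mul, ← ENNReal.toReal_rpow, ENNReal.coe_toReal,
      ← integral_norm_eq_lintegral_enorm hi₁.1, ← integral_norm_eq_lintegral_enorm hi₂.1,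
      ← integral_norm_eq_lintegral_enorm hi₃.1, ← integral_norm_eq_lintegral_enorm hi₄.1,
      Measure.real]
    rw [Real.mul_rpow (by positivity) (by positivity)]
    ring

end Riesz

section EuclideanSpace

lemma volume_box (d : ℕ) (R : ℝ) : volume (box d R) = ENNReal.ofReal (2 * R) ^ d := by
  have hbox : box d R = WithLp.ofLp ⁻¹' Set.Icc (fun _ ↦ -R) fun _ ↦ R := by
    ext x
    simp [box, abs_le, Pi.le_def, forall_and]
  rw [hbox, (PiLp.volume_preserving_ofLp (Fin d)).measure_preimage
    measurableSet_Icc.nullMeasurableSet, Real.volume_Icc_pi]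
  simp [two_mul]

lemma volume_box_ne_top (d : ℕ) (R : ℝ) : volume (box d R) ≠ ∞ := by
  rw [volume_box]
  finiteness

lemma measurable_heatKernel (d : ℕ) (t : ℝ) : Measurable (heatKernel d t) := by
  unfold heatKernel
  fun_prop

lemma heatKernel_nonneg (d : ℕ) {t : ℝ} (ht : 0 ≤ t) (x : EuclideanSpace ℝ (Fin d)) :
    0 ≤ heatKernel d t x := by
  unfold heatKernel
  positivity

lemma integral_heatKernel (d : ℕ) {t : ℝ} (ht : 0 < t) : ∫ x, heatKernel d t x = 1 := by
  have hexponent (x : EuclideanSpace ℝ (Fin d)) :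
      -‖x‖ ^ 2 / (2 * t) = -(2 * t)⁻¹ * ‖x‖ ^ 2 := by field_simp
  simp only [heatKernel, hexponent]
  rw [integral_const_mul, GaussianFourier.integral_rexp_neg_mul_sq_norm (by positivity),
    finrank_euclideanSpace_fin, div_inv_eq_mul, mul_left_comm, ← mul_assoc,
    ← Real.rpow_add (by positivity), neg_div, neg_add_cancel, Real.rpow_zero]

lemma integrable_heatKernel (d : ℕ) {t : ℝ} (ht : 0 < t) : Integrable (heatKernel d t) :=
  integrable_of_integral_eq_one (integral_heatKernel d ht)

lemma integral_norm_heatKernel (d : ℕ) {t : ℝ} (ht : 0 < t) : ∫ x, ‖heatKernel d t x‖ = 1 := by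
  simp only [Real.norm_of_nonneg (heatKernel_nonneg d ht.le _), integral_heatKernel d ht]

lemma volume_real_box_rpow {d : ℕ} (hd : d ≠ 0) {R : ℝ} (hR : 0 < R) (β : ℝ) :
    (volume.real (box d R) * volume.real (box d R)) ^ (1 - β / d) =
      2 ^ (2 * (d : ℝ) - 2 * β) * R ^ (2 * (d : ℝ) - 2 * β) := by
  have hvol : volume.real (box d R) = (2 * R) ^ (d : ℝ) := by
    rw [Measure.real, volume_box, ENNReal.toReal_pow, ENNReal.toReal_ofReal (by positivity),
      Real.rpow_natCast]
  rw [hvol, ← Real.mul_rpow two_pos.le hR.le, ← Real.rpow_add (by positivity),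
    ← Real.rpow_mul (by positivity)]
  congr 1
  field_simp
  ring

end EuclideanSpace

theorem stmt_8 (d : ℕ) (hd : 1 ≤ d) (β : ℝ) (hβ0 : 0 < β) (hβd : β < d) :
    ∃ C : ℝ, 0 < C ∧ ∀ t₁ t₂ t₃ t₄ : ℝ, 0 < t₁ → 0 < t₂ → 0 < t₃ → 0 < t₄ →
      ∀ R : ℝ, 0 < R → ∀ ξ : EuclideanSpace ℝ (Fin d),
      (∫ x₁ in box d R, ∫ x₂ in box d R,
          ∫ ytil : EuclideanSpace ℝ (Fin d), ∫ ztil : EuclideanSpace ℝ (Fin d),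
          ∫ y : EuclideanSpace ℝ (Fin d), ∫ z : EuclideanSpace ℝ (Fin d),
            heatKernel d t₁ (x₁ - ytil) * heatKernel d t₂ (x₂ - ztil) *
              heatKernel d t₃ (ytil - z) * heatKernel d t₄ (ξ - y) *
              ‖y - ytil‖ ^ (-β) * ‖z - ztil‖ ^ (-β)) ≤
        C * R ^ (2 * (d : ℝ) - 2 * β) := by
  obtain ⟨C, hC, hbound⟩ := stmt_8_general (volume : Measure (EuclideanSpace ℝ (Fin d))) hβ0.le
    (by simpa only [finrank_euclideanSpace_fin] using hβd)
  refine ⟨C * 2 ^ (2 * (d : ℝ) - 2 * β), by positivity, fun t₁ t₂ t₃ t₄ h₁ h₂ h₃ h₄ R hR ξ ↦ ?_⟩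
  simpa only [integral_norm_heatKernel, h₁, h₂, h₃, h₄, mul_one, finrank_euclideanSpace_fin,
    volume_real_box_rpow (Nat.one_le_iff_ne_zero.1 hd) hR, ← mul_assoc] using
    hbound (measurable_heatKernel d t₁) (measurable_heatKernel d t₂) (measurable_heatKernel d t₃)
      (measurable_heatKernel d t₄) (integrable_heatKernel d h₁) (integrable_heatKernel d h₂)
      (integrable_heatKernel d h₃) (integrable_heatKernel d h₄) (volume_box_ne_top d R)
      (volume_box_ne_top d R) ξ
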